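/- For every vector x = (x₁, x₂) ∈ ℝ² and every real number ω, the integral over the unit circle of plane waves satisfies ∫₀^{2π} exp(i·ω·(x₁ cos t + x₂ sin t)) dt = 2π · J₀(ω·‖x‖), where ‖x‖ is the Euclidean norm of x. -/

import Mathlib

/-!
Writing `x` in polar coordinates turns the phase into `ω ‖x‖ cos (t - φ)`, and periodicity removes
the shift `φ`, so it suffices to show `∫₀^{2π} exp (i a cos t) dt = 2π J₀(a)`. Expanding the
exponential and integrating termwise (dominated convergence with bound `|a|ⁿ / n!`) reduces this
to the moments of the cosine: the odd ones vanish and the `2m`-th one is `2π (2m)! / (2ᵐ m!)²`,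
both by the reduction formula for `∫ cosⁿ`. The surviving even terms are exactly `2π` times the
power series of `J₀`.
-/

/-- The Bessel function of integer order `n` of the first kind, defined by its
everywhere-convergent power series. -/
noncomputable def besselJ (n : ℕ) (x : ℝ) : ℝ :=
  ∑' m : ℕ, (-1 : ℝ) ^ m / ((Nat.factorial m : ℝ) * (Nat.factorial (m + n) : ℝ)) *
    (x / 2) ^ (2 * m + n)

open Real in
theorem integral_cos_pow_add_two (n : ℕ) :
    ∫ t in (0 : ℝ)..(2 * π), cos t ^ (n + 2) =
      (n + 1) / (n + 2) * ∫ t in (0 : ℝ)..(2 * π), cos t ^ n := by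
  rw [integral_cos_pow]
  simp

open Real in
theorem integral_cos_pow_odd_circle (m : ℕ) :
    ∫ t in (0 : ℝ)..(2 * π), cos t ^ (2 * m + 1) = 0 := by
  induction m with
  | zero => simp
  | succ k ih =>
    rw [show 2 * (k + 1) + 1 = (2 * k + 1) + 2 by ring, integral_cos_pow_add_two, ih, mul_zero]

open Real in
theorem integral_cos_pow_even_circle (m : ℕ) :
    ∫ t in (0 : ℝ)..(2 * π), cos t ^ (2 * m) =
      2 * π * ((2 * m).factorial / (2 ^ (2 * m) * (m.factorial : ℝ) ^ 2)) := by
  induction m with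
  | zero => simp
  | succ k ih =>
    rw [show 2 * (k + 1) = 2 * k + 2 by ring, integral_cos_pow_add_two, ih,
      Nat.factorial_succ (2 * k + 1), Nat.factorial_succ (2 * k), Nat.factorial_succ k]
    have h : (k.factorial : ℝ) ≠ 0 := by positivity
    push_cast
    field_simp
    ring

/-- Termwise integration of the exponential series of `exp (i a cos t)`. -/
theorem hasSum_integral_exp_cos (a : ℝ) :
    HasSum (fun n : ℕ => (Complex.I * a) ^ n / (n.factorial : ℂ) *
        ((∫ t in (0 : ℝ)..(2 * Real.pi), Real.cos t ^ n : ℝ) : ℂ))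
      (∫ t in (0 : ℝ)..(2 * Real.pi), Complex.exp (Complex.I * ((a * Real.cos t : ℝ) : ℂ))) := by
  have key : HasSum (fun n : ℕ => ∫ t in (0 : ℝ)..(2 * Real.pi),
        (Complex.I * a) ^ n / (n.factorial : ℂ) * ((Real.cos t ^ n : ℝ) : ℂ))
      (∫ t in (0 : ℝ)..(2 * Real.pi), Complex.exp (Complex.I * ((a * Real.cos t : ℝ) : ℂ))) := by
    refine intervalIntegral.hasSum_integral_of_dominated_convergence
      (fun n _ => |a| ^ n / n.factorial) ?_ ?_ ?_ ?_ ?_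
    · intro n
      exact Continuous.aestronglyMeasurable (by fun_prop)
    · refine fun n => .of_forall fun t _ => ?_
      have h : |Real.cos t| ^ n ≤ 1 := pow_le_one₀ (abs_nonneg _) (Real.abs_cos_le_one t)
      have h' : 0 ≤ |a| ^ n / n.factorial := by positivity
      rw [norm_mul, Complex.norm_real, norm_pow, Real.norm_eq_abs]
      simpa using mul_le_mul_of_nonneg_left h h'
    · exact .of_forall fun t _ => Real.summable_pow_div_factorial _
    · exact intervalIntegrable_const
    · refine .of_forall fun t _ => ?_
      have h := NormedSpace.expSeries_div_hasSum_exp (Complex.I * ((a * Real.cos t : ℝ) : ℂ))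
      rw [← Complex.exp_eq_exp_ℂ] at h
      refine (congrArg (HasSum · _) (funext fun n => ?_)).mpr h
      rw [div_mul_eq_mul_div, Complex.ofReal_pow, ← mul_pow, mul_assoc, ← Complex.ofReal_mul]
  convert key using 2 with n
  rw [intervalIntegral.integral_const_mul, intervalIntegral.integral_ofReal]

theorem integral_exp_cos_eq_besselJ_zero (a : ℝ) :
    ∫ t in (0 : ℝ)..(2 * Real.pi), Complex.exp (Complex.I * ((a * Real.cos t : ℝ) : ℂ)) =
      ((2 * Real.pi * besselJ 0 a : ℝ) : ℂ) := by
  have h := hasSum_integral_exp_cos a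
  have hinj : Function.Injective (fun m : ℕ => 2 * m) := fun _ _ h => by simpa using h
  rw [← hinj.hasSum_iff] at h
  · rw [← h.tsum_eq, besselJ, ← tsum_mul_left, Complex.ofReal_tsum]
    refine tsum_congr fun m => ?_
    simp only [Function.comp, integral_cos_pow_even_circle]
    have h1 : (m.factorial : ℂ) ≠ 0 := by exact_mod_cast m.factorial_ne_zero
    have h2 : ((2 * m).factorial : ℂ) ≠ 0 := by exact_mod_cast (2 * m).factorial_ne_zero
    push_cast
    rw [mul_pow, pow_mul Complex.I, Complex.I_sq, add_zero, add_zero, div_pow]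
    field_simp
  · intro n hn
    obtain ⟨m, rfl | rfl⟩ := n.even_or_odd'
    · exact absurd ⟨m, rfl⟩ hn
    · simp [integral_cos_pow_odd_circle]

/-- For every `x = (x₁, x₂) ∈ ℝ²` and `ω ∈ ℝ`,
`∫₀^{2π} exp(i ω (x₁ cos t + x₂ sin t)) dt = 2π J₀(ω ‖x‖)`. -/
theorem integral_circle_plane_wave_eq_besselJ_zero
    (x : EuclideanSpace ℝ (Fin 2)) (ω : ℝ) :
    ∫ t in (0 : ℝ)..(2 * Real.pi),
        Complex.exp (Complex.I * ((ω * (x 0 * Real.cos t + x 1 * Real.sin t) : ℝ) : ℂ)) =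
      ((2 * Real.pi * besselJ 0 (ω * ‖x‖) : ℝ) : ℂ) := by
  -- The polar angle of `x` is the argument of `x₁ + i x₂`.
  obtain ⟨φ, h0, h1⟩ : ∃ φ : ℝ, x 0 = ‖x‖ * Real.cos φ ∧ x 1 = ‖x‖ * Real.sin φ := by
    have hn : ‖x‖ = ‖(⟨x 0, x 1⟩ : ℂ)‖ := by
      rw [EuclideanSpace.norm_eq, Complex.norm_eq_sqrt_sq_add_sq]
      simp
    refine ⟨Complex.arg ⟨x 0, x 1⟩, ?_, ?_⟩
    · rw [hn, Complex.norm_mul_cos_arg]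
    · rw [hn, Complex.norm_mul_sin_arg]
  let f : ℝ → ℂ := fun t => Complex.exp (Complex.I * ((ω * ‖x‖ * Real.cos t : ℝ) : ℂ))
  have hf : Function.Periodic f (2 * Real.pi) := fun t => by simp only [f, Real.cos_add_two_pi]
  have hshift : ∀ t : ℝ,
      Complex.exp (Complex.I * ((ω * (x 0 * Real.cos t + x 1 * Real.sin t) : ℝ) : ℂ)) =
        f (t - φ) := by
    intro t
    have : ω * (x 0 * Real.cos t + x 1 * Real.sin t) = ω * ‖x‖ * Real.cos (t - φ) := by
      rw [h0, h1, Real.cos_sub]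
      ring
    simp only [f, this]
  simp only [hshift]
  rw [intervalIntegral.integral_comp_sub_right f φ,
    show 2 * Real.pi - φ = (0 - φ) + 2 * Real.pi by ring,
    hf.intervalIntegral_add_eq (0 - φ) 0, zero_add]
  exact integral_exp_cos_eq_besselJ_zero (ω * ‖x‖)
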